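/- Finite-sample form of the paper's Theorem 1 (generalization guarantee of the FAAL loss): let C ≥ 1, τ ≥ 0, and ℓ ∈ ℝ^C be a vector of class losses. Define the KL-ball worst-case loss L_FAAL = sup{ Σ_c w_c ℓ_c : w ∈ Δ_C, KL(w‖U) ≤ τ }. Let Y_1, …, Y_n be i.i.d. class labels uniformly distributed on {1, …, C}, and let L̂ = (1/n)·Σ_{i=1}^n ℓ(Y_i) = Σ_c P̂_n(c)·ℓ_c denote the empirical test loss under the realized (shifted) class proportions. Then Pr( L̂ ≤ L_FAAL ) ≥ 1 − (n + 1)^C · exp(−n·τ); i.e., the FAAL objective upper-bounds the loss under the unknown group distribution shift with probability at least 1 − e^{−τn + C·log(n+1)}. -/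

import Mathlib

open Real Finset

/-- The probability simplex `Δ_C` in `ℝ^C`. -/
def simplex (C : ℕ) : Set (Fin C → ℝ) :=
  {w | (∀ c, 0 ≤ w c) ∧ ∑ c, w c = 1}

/-- The uniform distribution `U` on `C` classes. -/
noncomputable def uniform (C : ℕ) : Fin C → ℝ := fun _ => 1 / C

/-- Kullback–Leibler divergence `KL(p‖q)` with the conventions `0·log(0/q) = 0`
(automatic since `0 * x = 0`) and `KL(p‖q) = ⊤` when `p c > 0` but `q c = 0`. -/
noncomputable def KL {C : ℕ} (p q : Fin C → ℝ) : EReal :=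
  if ∀ c, 0 < p c → 0 < q c
  then ((∑ c, p c * Real.log (p c / q c) : ℝ) : EReal)
  else ⊤

/-- The FAAL objective `L_FAAL(ℓ, τ) = sup { Σ_c w_c ℓ_c : w ∈ Δ_C, KL(U‖w) ≤ τ }`. -/
noncomputable def faal (C : ℕ) (ℓ : Fin C → ℝ) (τ : ℝ) : ℝ :=
  sSup {s | ∃ w ∈ simplex C, KL (uniform C) w ≤ (τ : EReal) ∧ s = ∑ c, w c * ℓ c}

open MeasureTheory ENNReal

/-!
The empirical loss depends on the samples only through their empirical distribution `P̂`, as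
`L̂ = Σ_c P̂(c) ℓ_c`. It is at most the worst-case loss as soon as `P̂` lies in the divergence ball,
so it remains to bound the probability that `KL(P̂‖q) > τ`. This is Sanov's upper bound, by the
method of types. A sequence `f` with finite `KL(P̂‖q)` has probability
`∏ q(f i) = exp(-n KL(P̂‖q)) ∏ P̂(f i)`, and one with infinite divergence has probability zero.
The sequences sharing a given `P̂` have total mass at most one under i.i.d. sampling from `P̂`, and
there are at most `(n + 1)^C` empirical distributions.
-/

section EmpiricalDist

variable {ι α : Type*} [Fintype ι] [DecidableEq α]

/-- The empirical distribution of a finite family of samples `f`: `empiricalDist f c` is the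
proportion of indices `i` with `f i = c`. It is identically zero for the empty family. -/
noncomputable def empiricalDist (f : ι → α) (c : α) : ℝ :=
  #{i | f i = c} / Fintype.card ι

lemma empiricalDist_nonneg (f : ι → α) (c : α) : 0 ≤ empiricalDist f c := by
  unfold empiricalDist
  positivity

lemma empiricalDist_apply_pos (f : ι → α) (i : ι) : 0 < empiricalDist f (f i) :=
  div_pos (Nat.cast_pos.2 (card_pos.2 ⟨i, by simp⟩)) (Nat.cast_pos.2 (Fintype.card_pos_iff.2 ⟨i⟩))

lemma exists_apply_eq_of_empiricalDist_pos {f : ι → α} {c : α} (h : 0 < empiricalDist f c) :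
    ∃ i, f i = c := by
  contrapose! h
  simp [empiricalDist, h]

variable [Fintype α]

lemma card_mul_sum_empiricalDist_mul (f : ι → α) (g : α → ℝ) :
    Fintype.card ι * ∑ c, empiricalDist f c * g c = ∑ i, g (f i) := by
  rw [← sum_fiberwise' univ f g, mul_sum]
  refine sum_congr rfl fun c _ => ?_
  rcases isEmpty_or_nonempty ι with _ | _
  · simp
  · rw [sum_const, nsmul_eq_mul, empiricalDist]
    field_simp

lemma sum_empiricalDist [Nonempty ι] (f : ι → α) : ∑ c, empiricalDist f c = 1 := by
  have h := card_mul_sum_empiricalDist_mul f fun _ => 1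
  simpa using h

variable [DecidableEq ι]

lemma card_image_empiricalDist_le :
    #(univ.image (empiricalDist : (ι → α) → α → ℝ)) ≤
      (Fintype.card ι + 1) ^ Fintype.card α := by
  let frequencies : Finset ℝ :=
    (range (Fintype.card ι + 1)).image fun k : ℕ => (k : ℝ) / Fintype.card ι
  have hfreq : #frequencies ≤ Fintype.card ι + 1 := card_image_le.trans_eq (card_range _)
  have hsub : univ.image (empiricalDist : (ι → α) → α → ℝ) ⊆
      Fintype.piFinset fun _ => frequencies := by
    refine image_subset_iff.2 fun f _ => Fintype.mem_piFinset.2 fun c => ?_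
    exact mem_image_of_mem _ (mem_range_succ_iff.2 (card_le_univ _))
  calc #(univ.image (empiricalDist : (ι → α) → α → ℝ))
      ≤ #(Fintype.piFinset fun _ : α => frequencies) := card_le_card hsub
    _ = #frequencies ^ Fintype.card α := by simp
    _ ≤ (Fintype.card ι + 1) ^ Fintype.card α := Nat.pow_le_pow_left hfreq _

lemma sum_prod_empiricalDist_eq_one (f₀ : ι → α) :
    ∑ f : ι → α, ∏ i, empiricalDist f₀ (f i) = 1 := by
  rw [← Fintype.prod_sum]
  exact prod_eq_one fun i _ => haveI : Nonempty ι := ⟨i⟩; sum_empiricalDist f₀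

lemma sum_prod_empiricalDist_self_le :
    ∑ f : ι → α, ∏ i, empiricalDist f (f i) ≤
      ((Fintype.card ι : ℝ) + 1) ^ Fintype.card α := by
  have type_class_mass_le_one : ∀ p ∈ univ.image (empiricalDist : (ι → α) → α → ℝ),
      ∑ f : ι → α with empiricalDist f = p, ∏ i, empiricalDist f (f i) ≤ 1 := by
    simp only [mem_image, mem_univ, true_and, forall_exists_index, forall_apply_eq_imp_iff]
    intro f₀
    calc ∑ f : ι → α with empiricalDist f = empiricalDist f₀, ∏ i, empiricalDist f (f i)
        = ∑ f : ι → α with empiricalDist f = empiricalDist f₀, ∏ i, empiricalDist f₀ (f i) :=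
          sum_congr rfl fun f hf => by rw [(mem_filter.1 hf).2]
      _ ≤ ∑ f : ι → α, ∏ i, empiricalDist f₀ (f i) :=
          sum_le_univ_sum_of_nonneg fun f => prod_nonneg fun i _ => empiricalDist_nonneg f₀ _
      _ = 1 := sum_prod_empiricalDist_eq_one f₀
  calc ∑ f : ι → α, ∏ i, empiricalDist f (f i)
      = ∑ p ∈ univ.image (empiricalDist : (ι → α) → α → ℝ),
          ∑ f : ι → α with empiricalDist f = p, ∏ i, empiricalDist f (f i) :=
        (sum_fiberwise_of_maps_to (fun f _ => mem_image_of_mem _ (mem_univ f)) _).symm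
    _ ≤ #(univ.image (empiricalDist : (ι → α) → α → ℝ)) • (1 : ℝ) :=
        sum_le_card_nsmul _ _ _ type_class_mass_le_one
    _ ≤ ((Fintype.card ι : ℝ) + 1) ^ Fintype.card α := by
        rw [nsmul_one]
        exact_mod_cast card_image_empiricalDist_le

end EmpiricalDist

section Likelihood

variable {ι : Type*} [Fintype ι]

lemma prod_eq_exp_neg_mul_prod_empiricalDist {α : Type*} [Fintype α] [DecidableEq α]
    {q : α → ℝ} {f : ι → α} (hq : ∀ i, 0 < q (f i)) :
    ∏ i, q (f i) =
      exp (-(Fintype.card ι * ∑ c, empiricalDist f c * log (empiricalDist f c / q c))) *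
        ∏ i, empiricalDist f (f i) := by
  rw [card_mul_sum_empiricalDist_mul f fun c => log (empiricalDist f c / q c), ← sum_neg_distrib,
    exp_sum, ← prod_mul_distrib]
  refine prod_congr rfl fun i _ => ?_
  have hp := empiricalDist_apply_pos f i
  rw [exp_neg, exp_log (div_pos hp (hq i)), inv_div, div_mul_cancel₀ _ hp.ne']

variable {C : ℕ} {q : Fin C → ℝ} {τ : ℝ}

lemma prod_le_of_lt_KL_empiricalDist (hq : ∀ c, 0 ≤ q c) {f : ι → Fin C}
    (hτ : (τ : EReal) < KL (empiricalDist f) q) :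
    ∏ i, q (f i) ≤ exp (-(Fintype.card ι * τ)) * ∏ i, empiricalDist f (f i) := by
  have hp : 0 ≤ ∏ i, empiricalDist f (f i) := prod_nonneg fun i _ => empiricalDist_nonneg f _
  unfold KL at hτ
  split_ifs at hτ with hac
  · rw [prod_eq_exp_neg_mul_prod_empiricalDist fun i => hac _ (empiricalDist_apply_pos f i)]
    have hle := (EReal.coe_lt_coe_iff.1 hτ).le
    exact mul_le_mul_of_nonneg_right
      (exp_le_exp.2 (neg_le_neg (mul_le_mul_of_nonneg_left hle (Nat.cast_nonneg _)))) hp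
  · push Not at hac
    obtain ⟨c, hpc, hqc⟩ := hac
    obtain ⟨i, rfl⟩ := exists_apply_eq_of_empiricalDist_pos hpc
    rw [prod_eq_zero (mem_univ i) (hqc.antisymm (hq _))]
    exact mul_nonneg (exp_pos _).le hp

lemma sum_prod_of_lt_KL_empiricalDist_le [DecidableEq ι] (hq : ∀ c, 0 ≤ q c) :
    ∑ f : ι → Fin C with (τ : EReal) < KL (empiricalDist f) q, ∏ i, q (f i) ≤
      ((Fintype.card ι : ℝ) + 1) ^ C * exp (-(Fintype.card ι * τ)) := by
  have hp (f : ι → Fin C) : 0 ≤ ∏ i, empiricalDist f (f i) :=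
    prod_nonneg fun i _ => empiricalDist_nonneg f _
  calc ∑ f : ι → Fin C with (τ : EReal) < KL (empiricalDist f) q, ∏ i, q (f i)
      ≤ ∑ f : ι → Fin C with (τ : EReal) < KL (empiricalDist f) q,
          exp (-(Fintype.card ι * τ)) * ∏ i, empiricalDist f (f i) :=
        sum_le_sum fun f hf => prod_le_of_lt_KL_empiricalDist hq (mem_filter.1 hf).2
    _ ≤ ∑ f : ι → Fin C, exp (-(Fintype.card ι * τ)) * ∏ i, empiricalDist f (f i) :=
        sum_le_univ_sum_of_nonneg fun f => mul_nonneg (exp_pos _).le (hp f)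
    _ = (∑ f : ι → Fin C, ∏ i, empiricalDist f (f i)) * exp (-(Fintype.card ι * τ)) := by
        rw [← mul_sum, mul_comm]
    _ ≤ ((Fintype.card ι : ℝ) + 1) ^ C * exp (-(Fintype.card ι * τ)) := by
        gcongr
        simpa only [Fintype.card_fin] using sum_prod_empiricalDist_self_le (ι := ι) (α := Fin C)

end Likelihood

section Sanov

variable {Ω ι : Type*} [MeasurableSpace Ω] {μ : Measure Ω} [Fintype ι]

lemma measure_setOf_le_ofReal_sum_prod [DecidableEq ι] {α : Type*} [Fintype α] {q : α → ℝ}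
    (hq : ∀ c, 0 ≤ q c) {Y : ι → Ω → α}
    (hY : ∀ f : ι → α, μ {ω | ∀ i, Y i ω = f i} = ∏ i, ENNReal.ofReal (q (f i)))
    (P : (ι → α) → Prop) [DecidablePred P] :
    μ {ω | P fun i => Y i ω} ≤ ENNReal.ofReal (∑ f with P f, ∏ i, q (f i)) := by
  have hsub : {ω | P fun i => Y i ω} ⊆ ⋃ f ∈ univ.filter P, {ω | ∀ i, Y i ω = f i} :=
    fun ω hω => Set.mem_biUnion (x := fun i => Y i ω) (by simpa using hω) fun _ => rfl
  calc μ {ω | P fun i => Y i ω}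
      ≤ ∑ f with P f, μ {ω | ∀ i, Y i ω = f i} :=
        (measure_mono hsub).trans (measure_biUnion_finset_le _ _)
    _ = ∑ f with P f, ENNReal.ofReal (∏ i, q (f i)) :=
        sum_congr rfl fun f _ => by rw [hY, ENNReal.ofReal_prod_of_nonneg fun i _ => hq _]
    _ = ENNReal.ofReal (∑ f with P f, ∏ i, q (f i)) :=
        (ENNReal.ofReal_sum_of_nonneg fun f _ => prod_nonneg fun i _ => hq _).symm

theorem measure_lt_KL_empiricalDist_le {C : ℕ} {q : Fin C → ℝ} (hq : ∀ c, 0 ≤ q c)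
    {Y : ι → Ω → Fin C}
    (hY : ∀ f : ι → Fin C, μ {ω | ∀ i, Y i ω = f i} = ∏ i, ENNReal.ofReal (q (f i))) (τ : ℝ) :
    μ {ω | (τ : EReal) < KL (empiricalDist fun i => Y i ω) q} ≤
      ((Fintype.card ι : ℝ≥0∞) + 1) ^ C * ENNReal.ofReal (exp (-(Fintype.card ι * τ))) := by
  classical
  calc μ {ω | (τ : EReal) < KL (empiricalDist fun i => Y i ω) q}
      ≤ ENNReal.ofReal
          (∑ f : ι → Fin C with (τ : EReal) < KL (empiricalDist f) q, ∏ i, q (f i)) :=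
        measure_setOf_le_ofReal_sum_prod hq hY fun f => (τ : EReal) < KL (empiricalDist f) q
    _ ≤ ENNReal.ofReal
          (((Fintype.card ι : ℝ) + 1) ^ C * exp (-(Fintype.card ι * τ))) :=
        ENNReal.ofReal_le_ofReal (sum_prod_of_lt_KL_empiricalDist_le hq)
    _ = ((Fintype.card ι : ℝ≥0∞) + 1) ^ C * ENNReal.ofReal (exp (-(Fintype.card ι * τ))) := by
        rw [ENNReal.ofReal_mul (by positivity), ENNReal.ofReal_pow (by positivity),
          ENNReal.ofReal_add (by positivity) zero_le_one, ENNReal.ofReal_natCast,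
          ENNReal.ofReal_one]

end Sanov

section WorstCaseLoss

variable {C : ℕ} {q : Fin C → ℝ}

/-- The worst-case expected loss `sup {Σ_c w_c ℓ_c : w ∈ Δ_C, KL(w‖q) ≤ τ}` over a divergence ball
around the reference distribution `q`; for uniform `q` this is `L_FAAL`, with the arguments of the
divergence in the opposite order to `faal`. -/
noncomputable def klBallLoss (q ℓ : Fin C → ℝ) (τ : ℝ) : ℝ :=
  sSup {s | ∃ w ∈ simplex C, KL w q ≤ (τ : EReal) ∧ s = ∑ c, w c * ℓ c}

lemma sum_mul_le_sum_abs_of_mem_simplex {w : Fin C → ℝ} (hw : w ∈ simplex C) (ℓ : Fin C → ℝ) :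
    ∑ c, w c * ℓ c ≤ ∑ c, |ℓ c| := by
  refine sum_le_sum fun c _ => ?_
  have hle : w c ≤ 1 := hw.2 ▸ single_le_sum (fun c _ => hw.1 c) (mem_univ c)
  calc w c * ℓ c ≤ w c * |ℓ c| := mul_le_mul_of_nonneg_left (le_abs_self _) (hw.1 c)
    _ ≤ |ℓ c| := mul_le_of_le_one_left (abs_nonneg _) hle

lemma sum_mul_le_klBallLoss {w : Fin C → ℝ} (hw : w ∈ simplex C) {τ : ℝ}
    (hτ : KL w q ≤ (τ : EReal)) (ℓ : Fin C → ℝ) : ∑ c, w c * ℓ c ≤ klBallLoss q ℓ τ := by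
  refine le_csSup ⟨∑ c, |ℓ c|, ?_⟩ ⟨w, hw, hτ, rfl⟩
  rintro _ ⟨v, hv, -, rfl⟩
  exact sum_mul_le_sum_abs_of_mem_simplex hv ℓ

lemma mean_le_klBallLoss {ι : Type*} [Fintype ι] [Nonempty ι] {f : ι → Fin C} {τ : ℝ}
    (hτ : KL (empiricalDist f) q ≤ (τ : EReal)) (ℓ : Fin C → ℝ) :
    1 / (Fintype.card ι : ℝ) * ∑ i, ℓ (f i) ≤ klBallLoss q ℓ τ := by
  rw [← card_mul_sum_empiricalDist_mul f ℓ, one_div, inv_mul_cancel_left₀ (by positivity)]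
  exact sum_mul_le_klBallLoss ⟨empiricalDist_nonneg f, sum_empiricalDist f⟩ hτ ℓ

end WorstCaseLoss

lemma uniform_mem_simplex {C : ℕ} (hC : C ≠ 0) : uniform C ∈ simplex C := by
  refine ⟨fun c => by unfold uniform; positivity, ?_⟩
  simp [uniform, hC]

theorem faal_generalization_finite_sample_general {Ω : Type*} [MeasurableSpace Ω]
    (μ : Measure Ω) [IsProbabilityMeasure μ] {C n : ℕ} (hn : 1 ≤ n)
    {q : Fin C → ℝ} (hq : q ∈ simplex C) (Y : Fin n → Ω → Fin C)
    (hiid : ∀ f : Fin n → Fin C,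
      μ {ω | ∀ i, Y i ω = f i} = ∏ i, ENNReal.ofReal (q (f i)))
    (ℓ : Fin C → ℝ) (τ : ℝ) :
    1 - ((n : ℝ≥0∞) + 1) ^ C * ENNReal.ofReal (Real.exp (-(n : ℝ) * τ)) ≤
      μ {ω | (1 / (n : ℝ)) * ∑ i, ℓ (Y i ω) ≤ klBallLoss q ℓ τ} := by
  have : Nonempty (Fin n) := ⟨⟨0, hn⟩⟩
  set S := {ω | (1 / (n : ℝ)) * ∑ i, ℓ (Y i ω) ≤ klBallLoss q ℓ τ}
  have hsub : Sᶜ ⊆ {ω | (τ : EReal) < KL (empiricalDist fun i => Y i ω) q} := by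
    intro ω hω
    refine lt_of_not_ge (α := EReal) fun hKL => hω ?_
    simpa only [S, Set.mem_ofPred_eq, Fintype.card_fin] using mean_le_klBallLoss hKL ℓ
  have hfail : μ Sᶜ ≤ ((n : ℝ≥0∞) + 1) ^ C * ENNReal.ofReal (Real.exp (-(n : ℝ) * τ)) := by
    simpa only [Fintype.card_fin, neg_mul] using
      (measure_mono hsub).trans (measure_lt_KL_empiricalDist_le hq.1 hiid τ)
  refine tsub_le_iff_right.2 ?_
  calc 1 = μ Set.univ := measure_univ.symm
    _ ≤ μ S + μ Sᶜ := measure_univ_le_add_compl S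
    _ ≤ _ := by gcongr

/-- finite-sample generalization guarantee of the FAAL loss
(paper's Theorem 1, finite-sample form).  With
`L_FAAL = sup{ Σ_c w_c ℓ_c : w ∈ Δ_C, KL(w‖U) ≤ τ }` and `Y_1, …, Y_n` i.i.d.
uniform class labels, the empirical test loss `L̂ = (1/n)·Σ_i ℓ(Y_i)` satisfies
`Pr(L̂ ≤ L_FAAL) ≥ 1 − (n + 1)^C · exp(−n·τ)`. -/
theorem faal_generalization_finite_sample {Ω : Type*} [MeasurableSpace Ω]
    (μ : Measure Ω) [IsProbabilityMeasure μ] (C n : ℕ) (hC : 1 ≤ C) (hn : 1 ≤ n)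
    (Y : Fin n → Ω → Fin C) (hmeas : ∀ i, Measurable (Y i))
    (hiid : ∀ f : Fin n → Fin C,
      μ {ω | ∀ i, Y i ω = f i} = ∏ i, ENNReal.ofReal (uniform C (f i)))
    (ℓ : Fin C → ℝ) (τ : ℝ) (hτ : 0 ≤ τ) :
    1 - ((n : ℝ≥0∞) + 1) ^ C * ENNReal.ofReal (Real.exp (-(n : ℝ) * τ)) ≤
      μ {ω | (1 / (n : ℝ)) * ∑ i, ℓ (Y i ω) ≤
        sSup {s | ∃ w ∈ simplex C, KL w (uniform C) ≤ (τ : EReal) ∧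
          s = ∑ c, w c * ℓ c}} := by
  exact faal_generalization_finite_sample_general μ hn (uniform_mem_simplex (by lia)) Y hiid ℓ τ
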